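/- Let σ > 0, Υ > 0, K ∈ ℕ and 0 < S_1 < ⋯ < S_K < 1 be fixed, and set i(k) = ⌈nS_k⌉. For each n let V_n(σ) be the n×n symmetric tridiagonal matrix with entries V_n(σ)^{11} = σ²/n + Υ, V_n(σ)^{ii} = σ²/n + 2Υ for 2 ≤ i ≤ n, V_n(σ)^{ij} = −Υ for |i−j| = 1, and V_n(σ)^{ij} = 0 otherwise. Then V_n(σ) is positive definite, and for all k, l ∈ {1,…,K}, n^{−1/2} (V_n(σ)^{−1})_{i(k), i(l)} → (2σ√Υ)^{−1} 1_{{k=l}} as n→∞. Consequently, if ξ_n ∼ N(0, V_n(σ)) and γ̂^n_k = 2σ√Υ · n^{−1/2} (V_n(σ)^{−1} ξ_n)_{i(k)}, then √n · Cov(γ̂^n_k, γ̂^n_l) → 2σ√Υ · 1_{{k=l}}. -/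

import Mathlib

open Real Filter MeasureTheory Matrix

/-- The symmetric tridiagonal covariance matrix `V_n(σ)` (0-indexed version of the
1-indexed matrix in the statement): `V^{11} = σ²/n + Υ`, `V^{ii} = σ²/n + 2Υ` for
`2 ≤ i ≤ n`, `V^{ij} = -Υ` for `|i-j| = 1`, and `0` otherwise. -/
noncomputable def Vmat (σ Υ : ℝ) (n : ℕ) : Matrix (Fin n) (Fin n) ℝ :=
  fun i j =>
    if i = j then (if (i : ℕ) = 0 then σ ^ 2 / n + Υ else σ ^ 2 / n + 2 * Υ)
    else if (i : ℕ) + 1 = (j : ℕ) ∨ (j : ℕ) + 1 = (i : ℕ) then -Υ else 0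

/-- The `(i,j)` entry of an `n×n` matrix in 1-based indexing (`0` out of range). -/
def matEntry1 {n : ℕ} (M : Matrix (Fin n) (Fin n) ℝ) (i j : ℕ) : ℝ :=
  if h : 1 ≤ i ∧ i ≤ n ∧ 1 ≤ j ∧ j ≤ n then
    M ⟨i - 1, by omega⟩ ⟨j - 1, by omega⟩ else 0

/-- The `i`-th entry of a vector of length `n` in 1-based indexing (`0` out of range). -/
def vecEntry1 {n : ℕ} (v : Fin n → ℝ) (i : ℕ) : ℝ :=
  if h : 1 ≤ i ∧ i ≤ n then v ⟨i - 1, by omega⟩ else 0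

lemma aux_sum_pred {n : ℕ} (i : Fin n) (g : Fin n → ℝ) :
    ∑ k : Fin n, (if (k : ℕ) + 1 = (i : ℕ) then g k else 0) =
      if h : 1 ≤ (i : ℕ) then g ⟨(i : ℕ) - 1, by omega⟩ else 0 := by
  split_ifs with h
  · rw [Finset.sum_eq_single (⟨(i : ℕ) - 1, by omega⟩ : Fin n)]
    · simp only []
      rw [if_pos (by omega)]
    · intro b _ hb
      rw [if_neg]
      intro hc
      apply hb
      ext
      simp only []
      omega
    · simp
  · apply Finset.sum_eq_zero
    intro b _
    rw [if_neg (by omega)]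

lemma aux_sum_succ {n : ℕ} (i : Fin n) (g : Fin n → ℝ) :
    ∑ k : Fin n, (if (i : ℕ) + 1 = (k : ℕ) then g k else 0) =
      if h : (i : ℕ) + 1 < n then g ⟨(i : ℕ) + 1, h⟩ else 0 := by
  split_ifs with h
  · rw [Finset.sum_eq_single (⟨(i : ℕ) + 1, h⟩ : Fin n)]
    · simp
    · intro b _ hb
      rw [if_neg]
      intro hc
      apply hb
      ext
      simp only []
      omega
    · simp
  · apply Finset.sum_eq_zero
    intro b _
    rw [if_neg (by omega)]

/-- bidiagonal difference matrix -/
noncomputable def Dmat (n : ℕ) : Matrix (Fin n) (Fin n) ℝ :=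
  fun i k => (if i = k then 1 else 0) - (if (k : ℕ) + 1 = (i : ℕ) then 1 else 0)

lemma Dmat_mul (n : ℕ) (i j : Fin n) :
    (Dmat n * (Dmat n)ᴴ) i j =
      Dmat n j i - (if h : 1 ≤ (i : ℕ) then Dmat n j ⟨(i : ℕ) - 1, by omega⟩ else 0) := by
  rw [← aux_sum_pred i (fun k => Dmat n j k)]
  rw [Matrix.mul_apply]
  have h1 : Dmat n j i = ∑ k : Fin n, if i = k then Dmat n j k else 0 := by simp
  rw [h1, ← Finset.sum_sub_distrib]
  apply Finset.sum_congr rfl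
  intro k _
  simp only [Matrix.conjTranspose_apply, star_trivial]
  conv_lhs => rw [Dmat]
  split_ifs <;> ring

lemma Vmat_eq (σ Υ : ℝ) (n : ℕ) :
    Vmat σ Υ n = (σ ^ 2 / n) • (1 : Matrix (Fin n) (Fin n) ℝ) + Υ • (Dmat n * (Dmat n)ᴴ) := by
  ext i j
  rw [Matrix.add_apply, Matrix.smul_apply, Matrix.smul_apply, Dmat_mul]
  simp only [Vmat, Matrix.one_apply, Dmat, smul_eq_mul, Fin.ext_iff]
  split_ifs <;> first | (exfalso; omega) | ring

lemma Vmat_posDef (σ Υ : ℝ) (hσ : 0 < σ) (hΥ : 0 < Υ) (n : ℕ) : (Vmat σ Υ n).PosDef := by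
  rw [Vmat_eq]
  rcases Nat.eq_zero_or_pos n with rfl | hn
  · convert (Matrix.PosDef.one : (1 : Matrix (Fin 0) (Fin 0) ℝ).PosDef) using 1
    ext i
    exact i.elim0
  · apply Matrix.PosDef.add_posSemidef
    · exact Matrix.PosDef.one.smul (by positivity)
    · exact (Matrix.posSemidef_self_mul_conjTranspose (Dmat n)).smul hΥ.le

lemma Vmat_row (σ Υ : ℝ) (n : ℕ) (f : ℕ → ℝ) (hf : f n = 0) (i : Fin n) :
    ∑ k : Fin n, Vmat σ Υ n i k * f k =
      (if (i : ℕ) = 0 then (σ ^ 2 / n + Υ) * f 0 else (σ ^ 2 / n + 2 * Υ) * f i - Υ * f (i - 1))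
        - Υ * f (i + 1) := by
  have h1 : ∀ k : Fin n, Vmat σ Υ n i k * f k =
      (if i = k then (if (i : ℕ) = 0 then σ ^ 2 / n + Υ else σ ^ 2 / n + 2 * Υ) * f k else 0)
      - Υ * (if (k : ℕ) + 1 = (i : ℕ) then f k else 0)
      - Υ * (if (i : ℕ) + 1 = (k : ℕ) then f k else 0) := by
    intro k
    simp only [Vmat, Fin.ext_iff]
    split_ifs <;> first | (exfalso; omega) | ring
  simp only [h1, Finset.sum_sub_distrib, ← Finset.mul_sum]
  rw [aux_sum_pred i (fun k => f k), aux_sum_succ i (fun k => f k)]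
  have h2 : (if h : (i : ℕ) + 1 < n then f ((i : ℕ) + 1) else 0) = f ((i : ℕ) + 1) := by
    split_ifs with h
    · rfl
    · have : (i : ℕ) + 1 = n := by omega
      rw [this, hf]
  simp only [h2, Finset.sum_ite_eq, Finset.mem_univ, if_true]
  by_cases h0 : (i : ℕ) = 0
  · simp [h0]
  · have : 1 ≤ (i : ℕ) := by omega
    simp [h0, this]

/-- explicit Green function -/
noncomputable def Gf (q C : ℝ) (n j i : ℕ) : ℝ :=
  if i ≤ j then C * q ^ (j - i) * (1 + q ^ (2 * i + 1)) * (1 - q ^ (2 * (n - j)))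
  else C * q ^ (i - j) * (1 + q ^ (2 * j + 1)) * (1 - q ^ (2 * (n - i)))

lemma Gf_ge (q C : ℝ) (n j i : ℕ) (h : j ≤ i) :
    Gf q C n j i = C * q ^ (i - j) * (1 + q ^ (2 * j + 1)) * (1 - q ^ (2 * (n - i))) := by
  unfold Gf
  split_ifs with hle
  · have : i = j := by omega
    subst this; rfl
  · rfl

lemma Gf_le (q C : ℝ) (n j i : ℕ) (h : i ≤ j) :
    Gf q C n j i = C * q ^ (j - i) * (1 + q ^ (2 * i + 1)) * (1 - q ^ (2 * (n - j))) := by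
  rw [Gf, if_pos h]

lemma Gf_eq (σ Υ q C : ℝ) (n : ℕ) (hq : q ≠ 0) (hqa : σ ^ 2 / n * q = Υ * (1 - q) ^ 2)
    (hC : C * (Υ * (1 + q ^ (2 * n + 1)) * (1 - q ^ 2)) = q) :
    (Vmat σ Υ n)⁻¹ = Matrix.of fun i j : Fin n => Gf q C n j i := by
  apply Matrix.inv_eq_right_inv
  ext i j
  rw [Matrix.mul_apply]
  simp only [Matrix.of_apply]
  have hj := j.2
  have hi := i.2
  rw [Vmat_row σ Υ n (Gf q C n j) (by rw [Gf_ge _ _ _ _ _ hj.le]; simp) i]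
  rw [Matrix.one_apply]
  simp only [Fin.ext_iff]
  obtain ⟨i, hi2⟩ := i
  obtain ⟨j, hj2⟩ := j
  simp only [] at hi hj ⊢
  generalize σ ^ 2 / n = a at *
  apply mul_left_cancel₀ hq
  have ha2 : (a + 2 * Υ) * q = Υ * (1 + q ^ 2) := by linear_combination hqa
  have ha1 : (a + Υ) * q = Υ * (1 - q + q ^ 2) := by linear_combination hqa
  rcases lt_trichotomy i j with h | h | h
  · rw [if_neg (show ¬ i = j by omega)]
    obtain ⟨m, rfl⟩ : ∃ m, j = i + 1 + m := ⟨j - i - 1, by omega⟩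
    rcases Nat.eq_zero_or_pos i with rfl | h0
    · rw [if_pos rfl, Gf_le _ _ _ _ _ (by omega), Gf_le _ _ _ _ _ (by omega)]
      generalize (1 - q ^ (2 * (n - (0 + 1 + m)))) = Z
      rw [show 0 + 1 + m - 0 = m + 1 by omega, show 0 + 1 + m - (0 + 1) = m by omega]
      linear_combination (C * q ^ (m + 1) * (1 + q) * Z) * ha1
    · obtain ⟨p, rfl⟩ : ∃ p, i = p + 1 := ⟨i - 1, by omega⟩
      rw [if_neg (by omega), Gf_le _ _ _ _ _ (by omega), Gf_le _ _ _ _ _ (by omega),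
        Gf_le _ _ _ _ _ (by omega)]
      generalize (1 - q ^ (2 * (n - (p + 1 + 1 + m)))) = Z
      rw [show p + 1 + 1 + m - (p + 1) = m + 1 by omega, show p + 1 + 1 + m - (p + 1 - 1) = m + 2 by omega,
        show p + 1 + 1 + m - (p + 1 + 1) = m by omega, show p + 1 - 1 = p by omega]
      linear_combination (C * q ^ (m + 1) * (1 + q ^ (2 * (p + 1) + 1)) * Z) * ha2
  · subst h
    rw [if_pos rfl]
    obtain ⟨m, rfl⟩ : ∃ m, n = i + 1 + m := ⟨n - i - 1, by omega⟩
    rcases Nat.eq_zero_or_pos i with rfl | h0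
    · rw [if_pos rfl, Gf_le _ _ _ _ _ (by omega), Gf_ge _ _ _ _ _ (by omega)]
      rw [show 0 + 1 + m - 0 = m + 1 by omega, show 0 + 1 + m - (0 + 1) = m by omega]
      simp only [Nat.sub_self, Nat.sub_zero]
      linear_combination (C * (1 + q) * (1 - q ^ (2 * (m + 1)))) * ha1 + hC
    · obtain ⟨p, rfl⟩ : ∃ p, i = p + 1 := ⟨i - 1, by omega⟩
      rw [if_neg (by omega), Gf_le _ _ _ _ (p+1) (by omega), Gf_le _ _ _ _ (p+1-1) (by omega),
        Gf_ge _ _ _ _ _ (by omega)]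
      rw [show p + 1 - (p + 1) = 0 by omega, show p + 1 - (p + 1 - 1) = 1 by omega,
        show p + 1 + 1 - (p + 1) = 1 by omega, show p + 1 - 1 = p by omega,
        show p + 1 + 1 + m - (p + 1) = m + 1 by omega, show p + 1 + 1 + m - (p + 1 + 1) = m by omega]
      linear_combination (C * (1 + q ^ (2 * (p + 1) + 1)) * (1 - q ^ (2 * (m + 1)))) * ha2 + hC
  · rw [if_neg (show ¬ i = 0 by omega), if_neg (show ¬ i = j by omega)]
    obtain ⟨p, rfl⟩ : ∃ m, i = j + 1 + m := ⟨i - j - 1, by omega⟩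
    obtain ⟨m, rfl⟩ : ∃ m, n = j + 1 + p + 1 + m := ⟨n - (j + 1 + p) - 1, by omega⟩
    rw [Gf_ge _ _ _ _ _ (by omega), Gf_ge _ _ _ _ _ (by omega), Gf_ge _ _ _ _ _ (by omega)]
    rw [show j + 1 + p - j = p + 1 by omega, show j + 1 + p - 1 - j = p by omega,
      show j + 1 + p + 1 - j = p + 2 by omega,
      show j + 1 + p + 1 + m - (j + 1 + p) = m + 1 by omega,
      show j + 1 + p + 1 + m - (j + 1 + p - 1) = m + 2 by omega,
      show j + 1 + p + 1 + m - (j + 1 + p + 1) = m by omega]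
    generalize (1 + q ^ (2 * j + 1)) = Z
    linear_combination (C * q ^ (p + 1) * Z * (1 - q ^ (2 * (m + 1)))) * ha2

noncomputable def sN (σ Υ : ℝ) (n : ℕ) : ℝ := σ / √(Υ * n)

noncomputable def rN (σ Υ : ℝ) (n : ℕ) : ℝ := (√((sN σ Υ n) ^ 2 + 4) - sN σ Υ n) / 2

lemma sN_pos {σ Υ : ℝ} (hσ : 0 < σ) (hΥ : 0 < Υ) {n : ℕ} (hn : 0 < n) : 0 < sN σ Υ n := by
  unfold sN; positivity

lemma rN_eq (σ Υ : ℝ) (n : ℕ) : rN σ Υ n ^ 2 + sN σ Υ n * rN σ Υ n = 1 := by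
  unfold rN
  have := Real.sq_sqrt (show (0:ℝ) ≤ (sN σ Υ n) ^ 2 + 4 by positivity)
  linear_combination this / 4

lemma rN_pos (σ Υ : ℝ) (n : ℕ) : 0 < rN σ Υ n := by
  unfold rN
  have : sN σ Υ n < √((sN σ Υ n) ^ 2 + 4) := by
    apply Real.lt_sqrt_of_sq_lt
    linarith
  linarith

lemma sN_tendsto (σ Υ : ℝ) (hΥ : 0 < Υ) : Tendsto (sN σ Υ) atTop (nhds 0) := by
  unfold sN
  apply Tendsto.const_div_atTop
  apply Real.tendsto_sqrt_atTop.comp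
  exact tendsto_natCast_atTop_atTop.const_mul_atTop hΥ

lemma rN_tendsto (σ Υ : ℝ) (hΥ : 0 < Υ) : Tendsto (rN σ Υ) atTop (nhds 1) := by
  have hs := sN_tendsto σ Υ hΥ
  have hc : Continuous (fun s : ℝ => (√(s ^ 2 + 4) - s) / 2) := by fun_prop
  have := (hc.tendsto 0).comp hs
  have h4 : √(4:ℝ) = 2 := by
    rw [show (4:ℝ) = 2 ^ 2 by norm_num]; exact Real.sqrt_sq (by norm_num)
  change Tendsto (fun n => (√((sN σ Υ n) ^ 2 + 4) - sN σ Υ n) / 2) atTop (nhds 1)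
  simpa [h4, Function.comp_def] using this

lemma snN_tendsto (σ Υ : ℝ) (hσ : 0 < σ) (hΥ : 0 < Υ) :
    Tendsto (fun n : ℕ => sN σ Υ n * n) atTop atTop := by
  have h : ∀ n : ℕ, sN σ Υ n * n = (σ / √Υ) * √(n : ℝ) := by
    intro n
    unfold sN
    rw [Real.sqrt_mul hΥ.le]
    rcases Nat.eq_zero_or_pos n with rfl | hn
    · simp
    · have h1 : (0:ℝ) < √(n:ℝ) := by positivity
      have h2 : (0:ℝ) < √Υ := by positivity
      have h3 := Real.sq_sqrt (show (0:ℝ) ≤ n by positivity)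
      field_simp
      linear_combination -h3
  simp only [h]
  exact (Real.tendsto_sqrt_atTop.comp tendsto_natCast_atTop_atTop).const_mul_atTop (by positivity)

lemma pow_tendsto (σ Υ : ℝ) (hσ : 0 < σ) (hΥ : 0 < Υ) (m : ℕ → ℕ) (c d : ℝ) (hc : 0 < c)
    (hm : ∀ᶠ n : ℕ in atTop, c * n - d ≤ m n) :
    Tendsto (fun n => (rN σ Υ n ^ 2) ^ (m n)) atTop (nhds 0) := by
  have hs := sN_tendsto σ Υ hΥ
  have hr := rN_tendsto σ Υ hΥ
  have hsn := snN_tendsto σ Υ hσ hΥ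
  have h1 : Tendsto (fun n : ℕ => c * rN σ Υ n * (sN σ Υ n * n)
      + -(sN σ Υ n * rN σ Υ n * d)) atTop atTop := by
    apply Filter.Tendsto.atTop_add (C := -(0 * 1 * d))
    · apply Filter.Tendsto.pos_mul_atTop (C := c * 1) (by linarith) (hr.const_mul c) hsn
    · exact ((hs.mul hr).mul_const d).neg
  have h2 := Real.tendsto_exp_neg_atTop_nhds_zero.comp h1
  refine squeeze_zero' (Eventually.of_forall fun n => by positivity) ?_ h2
  filter_upwards [hm, eventually_gt_atTop 0] with n hn h0
  have e := rN_eq σ Υ n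
  have hrp := rN_pos σ Υ n
  have hsp := sN_pos hσ hΥ h0
  have hb : rN σ Υ n ^ 2 ≤ Real.exp (-(sN σ Υ n * rN σ Υ n)) := by
    have := Real.add_one_le_exp (-(sN σ Υ n * rN σ Υ n))
    linarith
  calc (rN σ Υ n ^ 2) ^ (m n) ≤ (Real.exp (-(sN σ Υ n * rN σ Υ n))) ^ (m n) := by gcongr
    _ = Real.exp ((m n : ℝ) * (-(sN σ Υ n * rN σ Υ n))) := by rw [Real.exp_nat_mul]
    _ ≤ _ := by
      simp only [Function.comp_def]
      apply Real.exp_le_exp.mpr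
      have : 0 < sN σ Υ n * rN σ Υ n := by positivity
      nlinarith [mul_le_mul_of_nonneg_left hn this.le]

noncomputable def CN (σ Υ : ℝ) (n : ℕ) : ℝ :=
  rN σ Υ n / (Υ * sN σ Υ n * (1 + rN σ Υ n ^ 2) * (1 + (rN σ Υ n ^ 2) ^ (2 * n + 1)))

lemma inv_eq (σ Υ : ℝ) (hσ : 0 < σ) (hΥ : 0 < Υ) (n : ℕ) (hn : 0 < n) :
    (Vmat σ Υ n)⁻¹ = Matrix.of fun i j : Fin n => Gf (rN σ Υ n ^ 2) (CN σ Υ n) n j i := by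
  have e := rN_eq σ Υ n
  have hrp := rN_pos σ Υ n
  have hsp := sN_pos hσ hΥ hn
  apply Gf_eq
  · positivity
  · have h1 : σ ^ 2 / n = Υ * sN σ Υ n ^ 2 := by
      unfold sN
      rw [div_pow, Real.sq_sqrt (by positivity)]
      field_simp
    rw [h1, show 1 - rN σ Υ n ^ 2 = sN σ Υ n * rN σ Υ n by linarith]
    ring
  · have h2 : 1 - (rN σ Υ n ^ 2) ^ 2 = sN σ Υ n * rN σ Υ n * (1 + rN σ Υ n ^ 2) := by
      linear_combination (-(1 + rN σ Υ n ^ 2)) * e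
    rw [h2]
    unfold CN
    field_simp

lemma CN_tendsto (σ Υ : ℝ) (hσ : 0 < σ) (hΥ : 0 < Υ) :
    Tendsto (fun n : ℕ => (n : ℝ) ^ (-(1 / 2) : ℝ) * CN σ Υ n) atTop
      (nhds ((2 * σ * √Υ)⁻¹)) := by
  have hr := rN_tendsto σ Υ hΥ
  have hp := pow_tendsto σ Υ hσ hΥ (fun n => 2 * n + 1) 1 0 one_pos
    (Eventually.of_forall fun n => by push_cast; linarith [n.cast_nonneg (α := ℝ)])
  have h := (hr.div (((hr.pow 2).const_add 1).mul (hp.const_add 1)) (by norm_num)).const_mul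
    ((σ * √Υ)⁻¹)
  have e : (2 * σ * √Υ)⁻¹ = (σ * √Υ)⁻¹ * (1 / ((1 + 1 ^ 2) * (1 + 0))) := by
    field_simp
    norm_num
  rw [e]
  refine h.congr' ?_
  filter_upwards [eventually_gt_atTop 0] with n hn
  have hrp := rN_pos σ Υ n
  simp only [Pi.div_apply]
  unfold CN
  generalize (rN σ Υ n ^ 2) ^ (2 * n + 1) = Z
  unfold sN
  generalize rN σ Υ n = r at *
  rw [Real.rpow_neg (by positivity), ← Real.sqrt_eq_rpow, Real.sqrt_mul hΥ.le]
  have h1 : (0:ℝ) < √(n:ℝ) := by positivity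
  have h2 : (0:ℝ) < √Υ := by positivity
  have h3 := Real.mul_self_sqrt hΥ.le
  generalize √(n:ℝ) = w at *
  generalize √Υ = y at *
  subst h3
  rw [inv_mul_eq_div, inv_mul_eq_div, div_div, div_div]
  rw [show y * y * (σ / (y * w)) * (1 + r ^ 2) * (1 + Z) * w
    = ((1 + r ^ 2) * (1 + Z) * (σ * y)) by field_simp]

lemma main_lim (σ Υ : ℝ) (hσ : 0 < σ) (hΥ : 0 < Υ) (S T : ℝ) (hS : 0 < S) (hST : S ≤ T)
    (hT : T < 1) :
    Tendsto (fun n : ℕ => ((n : ℝ)) ^ (-(1 / 2) : ℝ) *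
            matEntry1 (Vmat σ Υ n)⁻¹ ⌈(n : ℝ) * S⌉₊ ⌈(n : ℝ) * T⌉₊)
        atTop (nhds (if S = T then (2 * σ * Real.sqrt Υ)⁻¹ else 0)) := by
  have hC := CN_tendsto σ Υ hσ hΥ
  have hA := pow_tendsto σ Υ hσ hΥ (fun n => 2 * (⌈(n : ℝ) * S⌉₊ - 1) + 1) (2 * S) 1 (by linarith)
    (by
      filter_upwards [eventually_gt_atTop 0] with n hn
      have h1 : 1 ≤ ⌈(n : ℝ) * S⌉₊ := Nat.one_le_iff_ne_zero.mpr (by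
        have : 0 < ⌈(n : ℝ) * S⌉₊ := Nat.ceil_pos.mpr (by positivity)
        omega)
      have := Nat.le_ceil ((n : ℝ) * S)
      push_cast [Nat.cast_sub h1]
      linarith)
  have hB := pow_tendsto σ Υ hσ hΥ (fun n => 2 * (n - (⌈(n : ℝ) * T⌉₊ - 1))) (1 - T) 0 (by linarith)
    (by
      filter_upwards [eventually_gt_atTop 0] with n hn
      have h1 : 0 < ⌈(n : ℝ) * T⌉₊ := Nat.ceil_pos.mpr (by
          have : 0 < T := by linarith
          positivity)
      have h2 : ⌈(n : ℝ) * T⌉₊ ≤ n := Nat.ceil_le.mpr (by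
          nlinarith [n.cast_nonneg (α := ℝ)])
      have h3 := Nat.ceil_lt_add_one (show 0 ≤ (n : ℝ) * T by
          have : 0 < T := by linarith
          positivity)
      have h4 : n - (⌈(n : ℝ) * T⌉₊ - 1) = n + 1 - ⌈(n : ℝ) * T⌉₊ := by omega
      rw [h4]
      push_cast [Nat.cast_sub (show ⌈(n : ℝ) * T⌉₊ ≤ n + 1 by omega)]
      nlinarith [n.cast_nonneg (α := ℝ)])
  have hD : Tendsto (fun n : ℕ => (rN σ Υ n ^ 2) ^ (⌈(n : ℝ) * T⌉₊ - 1 - (⌈(n : ℝ) * S⌉₊ - 1)))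
      atTop (nhds (if S = T then 1 else 0)) := by
    split_ifs with h
    · subst h
      simp
    · have hlt : S < T := lt_of_le_of_ne hST h
      apply pow_tendsto σ Υ hσ hΥ _ (T - S) 1 (by linarith)
      filter_upwards [eventually_gt_atTop 0] with n hn
      have h1 : 0 < ⌈(n : ℝ) * S⌉₊ := Nat.ceil_pos.mpr (by positivity)
      have h2 : ⌈(n : ℝ) * S⌉₊ ≤ ⌈(n : ℝ) * T⌉₊ := Nat.ceil_mono (by gcongr)
      have h3 := Nat.ceil_lt_add_one (show 0 ≤ (n : ℝ) * S by positivity)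
      have h4 := Nat.le_ceil ((n : ℝ) * T)
      have h5 : ⌈(n : ℝ) * T⌉₊ - 1 - (⌈(n : ℝ) * S⌉₊ - 1) = ⌈(n : ℝ) * T⌉₊ - ⌈(n : ℝ) * S⌉₊ := by
        omega
      rw [h5, Nat.cast_sub h2]
      linarith
  have hfin := ((hC.mul hD).mul (hA.const_add 1)).mul (hB.const_sub 1)
  have e : (if S = T then (2 * σ * Real.sqrt Υ)⁻¹ else 0) =
      (2 * σ * √Υ)⁻¹ * (if S = T then 1 else 0) * (1 + 0) * (1 - 0) := by
    split_ifs <;> simp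
  rw [e]
  refine hfin.congr' ?_
  filter_upwards [eventually_gt_atTop 0] with n hn
  have hT0 : 0 < T := by linarith
  have h1 : 0 < ⌈(n : ℝ) * S⌉₊ := Nat.ceil_pos.mpr (by positivity)
  have h2 : ⌈(n : ℝ) * S⌉₊ ≤ ⌈(n : ℝ) * T⌉₊ := Nat.ceil_mono (by gcongr)
  have h3 : ⌈(n : ℝ) * T⌉₊ ≤ n := Nat.ceil_le.mpr (by
          nlinarith [n.cast_nonneg (α := ℝ)])
  rw [matEntry1, dif_pos (by omega), inv_eq σ Υ hσ hΥ n hn, Matrix.of_apply]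
  simp only []
  rw [Gf_le _ _ _ _ _ (by omega)]
  ring

lemma matEntry1_symm (σ Υ : ℝ) (hσ : 0 < σ) (hΥ : 0 < Υ) (n i j : ℕ) :
    matEntry1 (Vmat σ Υ n)⁻¹ i j = matEntry1 (Vmat σ Υ n)⁻¹ j i := by
  have h := (Vmat_posDef σ Υ hσ hΥ n).isHermitian.inv
  unfold matEntry1
  by_cases hc : 1 ≤ i ∧ i ≤ n ∧ 1 ≤ j ∧ j ≤ n
  · rw [dif_pos hc, dif_pos (by omega)]
    have := h.apply ⟨i - 1, by omega⟩ ⟨j - 1, by omega⟩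
    simpa using this.symm
  · rw [dif_neg hc, dif_neg (by omega)]

lemma lim2 (σ Υ : ℝ) (hσ : 0 < σ) (hΥ : 0 < Υ)
    (K : ℕ) (S : ℕ → ℝ)
    (hS0 : 0 < S 1) (hSK : S K < 1)
    (hSmono : ∀ k l, 1 ≤ k → k < l → l ≤ K → S k < S l) (k l : ℕ)
    (hk : 1 ≤ k) (hkK : k ≤ K) (hl : 1 ≤ l) (hlK : l ≤ K) :
      Tendsto (fun n : ℕ =>
          ((n : ℝ)) ^ (-(1 / 2) : ℝ) *
            matEntry1 (Vmat σ Υ n)⁻¹ ⌈(n : ℝ) * S k⌉₊ ⌈(n : ℝ) * S l⌉₊)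
        atTop (nhds (if k = l then (2 * σ * Real.sqrt Υ)⁻¹ else 0)) := by
  have hpos : ∀ k, 1 ≤ k → k ≤ K → 0 < S k := by
    intro k hk hkK
    rcases Nat.eq_or_lt_of_le hk with rfl | h
    · exact hS0
    · exact hS0.trans (hSmono 1 k le_rfl h hkK)
  have hlt : ∀ k, 1 ≤ k → k ≤ K → S k < 1 := by
    intro k hk hkK
    rcases Nat.eq_or_lt_of_le hkK with rfl | h
    · exact hSK
    · exact (hSmono k K hk h le_rfl).trans hSK
  rcases lt_trichotomy k l with h | h | h
  · have hm := hSmono k l hk h hlK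
    have := main_lim σ Υ hσ hΥ (S k) (S l) (hpos k hk hkK) hm.le (hlt l hl hlK)
    rw [if_neg hm.ne] at this
    rwa [if_neg h.ne]
  · subst h
    have := main_lim σ Υ hσ hΥ (S k) (S k) (hpos k hk hkK) le_rfl (hlt k hl hlK)
    rw [if_pos rfl] at this
    rwa [if_pos rfl]
  · have hm := hSmono l k hl h hkK
    have := main_lim σ Υ hσ hΥ (S l) (S k) (hpos l hl hlK) hm.le (hlt k hk hkK)
    rw [if_neg hm.ne] at this
    rw [if_neg h.ne']
    refine this.congr fun n => ?_
    rw [matEntry1_symm σ Υ hσ hΥ]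

lemma cov_eq (σ Υ : ℝ) (hσ : 0 < σ) (hΥ : 0 < Υ) {Ω : Type} [MeasurableSpace Ω] (P : Measure Ω)
    (n : ℕ) (ξ : Ω → Fin n → ℝ)
    (h2 : ∀ i j, Integrable (fun ω => ξ ω i * ξ ω j) P)
    (hV : ∀ i j, (∫ ω, ξ ω i * ξ ω j ∂P) = Vmat σ Υ n i j) (i j : ℕ) :
    (∫ ω, vecEntry1 ((Vmat σ Υ n)⁻¹ *ᵥ ξ ω) i * vecEntry1 ((Vmat σ Υ n)⁻¹ *ᵥ ξ ω) j ∂P) =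
      matEntry1 (Vmat σ Υ n)⁻¹ i j := by
  unfold vecEntry1 matEntry1
  by_cases hi : 1 ≤ i ∧ i ≤ n
  swap
  · rw [dif_neg (by omega)]; simp [hi]
  by_cases hj : 1 ≤ j ∧ j ≤ n
  swap
  · rw [dif_neg (by omega)]; simp [hj]
  rw [dif_pos (by omega)]
  simp only [dif_pos hi, dif_pos hj]
  generalize (⟨i - 1, _⟩ : Fin n) = a
  generalize (⟨j - 1, _⟩ : Fin n) = b
  have hpd := Vmat_posDef σ Υ hσ hΥ n
  have hsym : ∀ x y, (Vmat σ Υ n)⁻¹ x y = (Vmat σ Υ n)⁻¹ y x := by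
    intro x y
    have := hpd.isHermitian.inv.apply x y
    simpa using this.symm
  have hVV : Vmat σ Υ n * (Vmat σ Υ n)⁻¹ = 1 :=
    Matrix.mul_nonsing_inv _ (isUnit_iff_ne_zero.mpr hpd.det_pos.ne')
  generalize (Vmat σ Υ n)⁻¹ = W at *
  have h3 : ∀ ω, (W *ᵥ ξ ω) a * (W *ᵥ ξ ω) b
      = ∑ x, ∑ y, W a x * W b y * (ξ ω x * ξ ω y) := by
    intro ω
    simp only [Matrix.mulVec, dotProduct, Finset.sum_mul_sum]
    refine Finset.sum_congr rfl fun x _ => Finset.sum_congr rfl fun y _ => by ring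
  simp only [h3]
  rw [integral_finsetSum _ fun x _ => integrable_finsetSum _ fun y _ => (h2 x y).const_mul _]
  have h4 : ∀ x, (∫ ω, ∑ y, W a x * W b y * (ξ ω x * ξ ω y) ∂P)
      = W a x * (Vmat σ Υ n * W) x b := by
    intro x
    rw [integral_finsetSum _ fun y _ => (h2 x y).const_mul _, Matrix.mul_apply, Finset.mul_sum]
    refine Finset.sum_congr rfl fun y _ => ?_
    rw [integral_const_mul, hV, hsym b y]
    ring
  simp only [h4, hVV, Matrix.one_apply]
  simp

lemma mean_eq {Ω : Type} [MeasurableSpace Ω] (P : Measure Ω)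
    (n : ℕ) (W : Matrix (Fin n) (Fin n) ℝ) (ξ : Ω → Fin n → ℝ)
    (h1 : ∀ i, Integrable (fun ω => ξ ω i) P)
    (h0 : ∀ i, (∫ ω, ξ ω i ∂P) = 0) (i : ℕ) :
    (∫ ω, vecEntry1 (W *ᵥ ξ ω) i ∂P) = 0 := by
  unfold vecEntry1
  by_cases hi : 1 ≤ i ∧ i ≤ n
  swap
  · simp [hi]
  simp only [dif_pos hi, Matrix.mulVec, dotProduct]
  rw [integral_finsetSum _ fun x _ => (h1 x).const_mul _]
  simp [integral_const_mul, h0]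

/-- `V_n(σ)` is positive definite, `n^{-1/2}(V_n(σ)^{-1})_{i(k),i(l)} → (2σ√Υ)^{-1}1_{k=l}`
with `i(k) = ⌈nS_k⌉`, and consequently, for centered random vectors `ξ_n` with covariance
matrix `V_n(σ)` (e.g. `ξ_n ∼ N(0,V_n(σ))`) and
`γ̂^n_k = 2σ√Υ n^{-1/2}(V_n(σ)^{-1}ξ_n)_{i(k)}`, one has
`√n Cov(γ̂^n_k, γ̂^n_l) → 2σ√Υ 1_{k=l}`. -/
theorem stmt18 (σ Υ : ℝ) (hσ : 0 < σ) (hΥ : 0 < Υ)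
    (K : ℕ) (hK : 1 ≤ K) (S : ℕ → ℝ)
    (hS0 : 0 < S 1) (hSK : S K < 1)
    (hSmono : ∀ k l, 1 ≤ k → k < l → l ≤ K → S k < S l) :
    (∀ n : ℕ, (Vmat σ Υ n).PosDef) ∧
    (∀ k l : ℕ, 1 ≤ k → k ≤ K → 1 ≤ l → l ≤ K →
      Tendsto (fun n : ℕ =>
          ((n : ℝ)) ^ (-(1 / 2) : ℝ) *
            matEntry1 (Vmat σ Υ n)⁻¹ ⌈(n : ℝ) * S k⌉₊ ⌈(n : ℝ) * S l⌉₊)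
        atTop (nhds (if k = l then (2 * σ * Real.sqrt Υ)⁻¹ else 0))) ∧
    ∀ {Ω : Type} [MeasurableSpace Ω] (P : Measure Ω), IsProbabilityMeasure P →
      ∀ ξ : (n : ℕ) → Ω → Fin n → ℝ,
        (∀ n i, Integrable (fun ω => ξ n ω i) P) →
        (∀ n i j, Integrable (fun ω => ξ n ω i * ξ n ω j) P) →
        (∀ n i, (∫ ω, ξ n ω i ∂P) = 0) →
        (∀ n i j, (∫ ω, ξ n ω i * ξ n ω j ∂P) = Vmat σ Υ n i j) →
        ∀ γhat : ℕ → ℕ → Ω → ℝ,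
          (∀ n k ω, γhat n k ω = 2 * σ * Real.sqrt Υ * ((n : ℝ)) ^ (-(1 / 2) : ℝ) *
            vecEntry1 ((Vmat σ Υ n)⁻¹ *ᵥ ξ n ω) ⌈(n : ℝ) * S k⌉₊) →
          ∀ k l : ℕ, 1 ≤ k → k ≤ K → 1 ≤ l → l ≤ K →
            Tendsto (fun n : ℕ => Real.sqrt n *
                ((∫ ω, γhat n k ω * γhat n l ω ∂P)
                  - (∫ ω, γhat n k ω ∂P) * (∫ ω, γhat n l ω ∂P)))
              atTop (nhds (if k = l then 2 * σ * Real.sqrt Υ else 0)) := by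
  
  refine ⟨Vmat_posDef σ Υ hσ hΥ, fun k l hk hkK hl hlK =>
    lim2 σ Υ hσ hΥ K S hS0 hSK hSmono k l hk hkK hl hlK, ?_⟩
  intro Ω _ P _ ξ h1 h2 h0 hV γhat hγ k l hk hkK hl hlK
  have h := (lim2 σ Υ hσ hΥ K S hS0 hSK hSmono k l hk hkK hl hlK).const_mul ((2 * σ * √Υ) ^ 2)
  have e : (if k = l then 2 * σ * √Υ else 0) =
      (2 * σ * √Υ) ^ 2 * (if k = l then (2 * σ * √Υ)⁻¹ else 0) := by
    have : 2 * σ * √Υ ≠ 0 := by positivity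
    split_ifs
    · field_simp
    · simp
  rw [e]
  refine h.congr' ?_
  filter_upwards [eventually_gt_atTop 0] with n hn
  have hm : (∫ ω, γhat n k ω ∂P) = 0 := by
    simp only [hγ]
    rw [integral_const_mul, mean_eq P n _ (ξ n) (h1 n) (h0 n), mul_zero]
  have hc : (∫ ω, γhat n k ω * γhat n l ω ∂P) =
      (2 * σ * √Υ * ((n : ℝ)) ^ (-(1 / 2) : ℝ)) ^ 2 *
        matEntry1 (Vmat σ Υ n)⁻¹ ⌈(n : ℝ) * S k⌉₊ ⌈(n : ℝ) * S l⌉₊ := by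
    rw [← cov_eq σ Υ hσ hΥ P n (ξ n) (h2 n) (hV n), ← integral_const_mul]
    refine integral_congr_ae (Eventually.of_forall fun ω => ?_)
    simp only [hγ]
    ring
  rw [hm, hc, Real.rpow_neg (by positivity), ← Real.sqrt_eq_rpow]
  have hw : (0:ℝ) < √(n:ℝ) := by positivity
  field_simp
  ring
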